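/- For every Ω ∈ 𝔖₂, writing E1(x) = A10²x1² + A1²x4² − A2²x5² − A5²x6², E2(x) = A10²x2² + A3²x4² − A4²x5² − A8²x6², E3(x) = A10²x3² + A6²x4² − A9²x5² − A7²x6², E5(x) = A2²x1² − A4²x2² − A9²x3² + A10²x5², E7(x) = A8²x1² − A5²x2² − A9²x4² + A6²x5², E8(x) = A3²x1² − A1²x2² + A7²x5² − A9²x6² as quadratic forms on ℂ⁶, the following identities hold for all x = (x1,…,x6) ∈ ℂ⁶: A10²·E5(x) = A2²·E1(x) − A4²·E2(x) − A9²·E3(x); A10²·E7(x) = A8²·E1(x) − A5²·E2(x); and A10²·E8(x) = A3²·E1(x) − A1²·E2(x). -/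

import Mathlib

/-!
After comparing coefficients of the `x i ^ 2`, the three identities amount to six quartic relations
between the theta constants, such as `A₁² A₂² = A₃² A₄² + A₆² A₉²`. They all follow from the
classical addition formula (`theta2_sq`), which writes the square of every even theta constant as a
quadratic form in the four second-order theta constants `Θ_c = θ[c; 0](0, 2Ω)`, `c ∈ {0, 1/2}²`:
`θ[a; b](0, Ω)² = ∑_c exp(4πi (a + c)·b) Θ_{a+c} Θ_c`. After substitution each relation is a
polynomial identity in the `Θ_c`.

The addition formula itself is the parallelogram law for the quadratic form `Ω`
(`thetaTerm_mul_thetaTerm`) together with the splitting of pairs of lattice vectors by the parity of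
their difference (`paritySplit_bijective`); the rearrangement is licensed by absolute convergence,
which holds because `Im Ω` is positive definite (`summable_norm_thetaTerm`).
-/

open Complex

/-- Genus-2 theta function with characteristics. -/
noncomputable def theta2 (a b : Fin 2 → ℝ) (z : Fin 2 → ℂ)
    (Ω : Matrix (Fin 2) (Fin 2) ℂ) : ℂ :=
  ∑' n : Fin 2 → ℤ,
    Complex.exp ((Real.pi : ℂ) * I *
        (∑ i, ∑ j, ((n i : ℂ) + (a i : ℂ)) * Ω i j * ((n j : ℂ) + (a j : ℂ)))
      + 2 * (Real.pi : ℂ) * I * (∑ i, ((n i : ℂ) + (a i : ℂ)) * (z i + (b i : ℂ))))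

/-- The Siegel upper half space of degree 2. -/
def IsSiegel (Ω : Matrix (Fin 2) (Fin 2) ℂ) : Prop :=
  Ω.IsSymm ∧ (Matrix.of fun i j => (Ω i j).im).PosDef

noncomputable def A₁ (Ω : Matrix (Fin 2) (Fin 2) ℂ) : ℂ := theta2 ![0, 0] ![0, 0] 0 Ω
noncomputable def A₂ (Ω : Matrix (Fin 2) (Fin 2) ℂ) : ℂ := theta2 ![0, 0] ![0, 1/2] 0 Ω
noncomputable def A₃ (Ω : Matrix (Fin 2) (Fin 2) ℂ) : ℂ := theta2 ![0, 0] ![1/2, 0] 0 Ω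
noncomputable def A₄ (Ω : Matrix (Fin 2) (Fin 2) ℂ) : ℂ := theta2 ![0, 0] ![1/2, 1/2] 0 Ω
noncomputable def A₅ (Ω : Matrix (Fin 2) (Fin 2) ℂ) : ℂ := theta2 ![0, 1/2] ![0, 0] 0 Ω
noncomputable def A₆ (Ω : Matrix (Fin 2) (Fin 2) ℂ) : ℂ := theta2 ![1/2, 0] ![0, 0] 0 Ω
noncomputable def A₇ (Ω : Matrix (Fin 2) (Fin 2) ℂ) : ℂ := theta2 ![1/2, 1/2] ![0, 0] 0 Ω
noncomputable def A₈ (Ω : Matrix (Fin 2) (Fin 2) ℂ) : ℂ := theta2 ![0, 1/2] ![1/2, 0] 0 Ω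
noncomputable def A₉ (Ω : Matrix (Fin 2) (Fin 2) ℂ) : ℂ := theta2 ![1/2, 0] ![0, 1/2] 0 Ω
noncomputable def A₁₀ (Ω : Matrix (Fin 2) (Fin 2) ℂ) : ℂ := theta2 ![1/2, 1/2] ![1/2, 1/2] 0 Ω

noncomputable def X₁ (z : Fin 2 → ℂ) (Ω : Matrix (Fin 2) (Fin 2) ℂ) : ℂ :=
  theta2 ![0, 1/2] ![0, 1/2] (fun i => 2 * z i) Ω
noncomputable def X₂ (z : Fin 2 → ℂ) (Ω : Matrix (Fin 2) (Fin 2) ℂ) : ℂ :=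
  theta2 ![0, 1/2] ![1/2, 1/2] (fun i => 2 * z i) Ω
noncomputable def X₃ (z : Fin 2 → ℂ) (Ω : Matrix (Fin 2) (Fin 2) ℂ) : ℂ :=
  theta2 ![1/2, 1/2] ![0, 1/2] (fun i => 2 * z i) Ω
noncomputable def X₄ (z : Fin 2 → ℂ) (Ω : Matrix (Fin 2) (Fin 2) ℂ) : ℂ :=
  theta2 ![1/2, 0] ![1/2, 0] (fun i => 2 * z i) Ω
noncomputable def X₅ (z : Fin 2 → ℂ) (Ω : Matrix (Fin 2) (Fin 2) ℂ) : ℂ :=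
  theta2 ![1/2, 0] ![1/2, 1/2] (fun i => 2 * z i) Ω
noncomputable def X₆ (z : Fin 2 → ℂ) (Ω : Matrix (Fin 2) (Fin 2) ℂ) : ℂ :=
  theta2 ![1/2, 1/2] ![1/2, 0] (fun i => 2 * z i) Ω

/-- The summand of `theta2` at `z = 0`. -/
noncomputable def thetaTerm (a b : Fin 2 → ℝ) (Ω : Matrix (Fin 2) (Fin 2) ℂ) (n : Fin 2 → ℤ) : ℂ :=
  Complex.exp ((Real.pi : ℂ) * I *
        (∑ i, ∑ j, ((n i : ℂ) + (a i : ℂ)) * Ω i j * ((n j : ℂ) + (a j : ℂ)))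
      + 2 * (Real.pi : ℂ) * I *
        (∑ i, ((n i : ℂ) + (a i : ℂ)) * ((0 : Fin 2 → ℂ) i + (b i : ℂ))))

theorem theta2_zero_eq_tsum (a b : Fin 2 → ℝ) (Ω : Matrix (Fin 2) (Fin 2) ℂ) :
    theta2 a b 0 Ω = ∑' n, thetaTerm a b Ω n := rfl

/-! ### Convergence -/

/-- A positive definite real binary quadratic form dominates a multiple of the standard one. -/
theorem exists_posDef_lower_bound {Y : Matrix (Fin 2) (Fin 2) ℝ} (hY : Y.PosDef) :
    ∃ δ : ℝ, 0 < δ ∧ ∀ x y : ℝ,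
      δ * (x ^ 2 + y ^ 2) ≤ x * Y 0 0 * x + x * Y 0 1 * y + (y * Y 1 0 * x + y * Y 1 1 * y) := by
  have hsymm : Y 1 0 = Y 0 1 := by
    simpa using hY.1.apply 0 1
  have hdet : 0 < Y 0 0 * Y 1 1 - Y 0 1 * Y 0 1 := by
    have h := hY.det_pos
    rwa [Matrix.det_fin_two, hsymm] at h
  have h0 : 0 < Y 0 0 := hY.diag_pos
  have h1 : 0 < Y 1 1 := hY.diag_pos
  set p := Y 0 0
  set q := Y 0 1
  set r := Y 1 1
  rw [hsymm]
  -- `det / trace` is at most the smallest eigenvalue.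
  refine ⟨(p * r - q * q) / (p + r), by positivity, fun x y => ?_⟩
  rw [div_mul_eq_mul_div, div_le_iff₀ (by positivity)]
  nlinarith [sq_nonneg (p * x + q * y), sq_nonneg (q * x + r * y)]

theorem norm_thetaTerm (a b : Fin 2 → ℝ) (Ω : Matrix (Fin 2) (Fin 2) ℂ) (n : Fin 2 → ℤ) :
    ‖thetaTerm a b Ω n‖ = Real.exp (-Real.pi *
      ((n 0 + a 0) * (Ω 0 0).im * (n 0 + a 0) + (n 0 + a 0) * (Ω 0 1).im * (n 1 + a 1) +
      ((n 1 + a 1) * (Ω 1 0).im * (n 0 + a 0) + (n 1 + a 1) * (Ω 1 1).im * (n 1 + a 1)))) := by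
  rw [thetaTerm, Complex.norm_exp]
  congr 1
  simp [Fin.sum_univ_two]

/-- One-dimensional Gaussian sums over a shifted lattice converge: the linear part of the exponent
is absorbed into the argument of Jacobi's theta function. -/
theorem summable_gaussian_shift {δ : ℝ} (hδ : 0 < δ) (s : ℝ) :
    Summable fun n : ℤ => Real.exp (-Real.pi * (δ * ((n : ℝ) + s) ^ 2)) := by
  have h := ((summable_jacobiTheta₂_term_iff (δ * s * I) (δ * I)).2 (by simpa using hδ)).norm
  refine (h.mul_left (Real.exp (-Real.pi * (δ * s ^ 2)))).congr fun n => ?_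
  rw [norm_jacobiTheta₂_term, ← Real.exp_add]
  congr 1
  simp
  ring

theorem summable_norm_thetaTerm {Ω : Matrix (Fin 2) (Fin 2) ℂ} (hΩ : IsSiegel Ω)
    (a b : Fin 2 → ℝ) : Summable fun n => ‖thetaTerm a b Ω n‖ := by
  obtain ⟨δ, hδ, hb⟩ := exists_posDef_lower_bound hΩ.2
  have h := (summable_gaussian_shift hδ (a 0)).mul_of_nonneg (summable_gaussian_shift hδ (a 1))
    (fun _ => (Real.exp_pos _).le) (fun _ => (Real.exp_pos _).le)
  have h' := (finTwoArrowEquiv ℤ).summable_iff.2 h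
  refine Summable.of_nonneg_of_le (fun _ => norm_nonneg _) (fun n => ?_) h'
  rw [norm_thetaTerm]
  change _ ≤ Real.exp (-Real.pi * (δ * ((n 0 : ℝ) + a 0) ^ 2)) *
    Real.exp (-Real.pi * (δ * ((n 1 : ℝ) + a 1) ^ 2))
  rw [← Real.exp_add, Real.exp_le_exp]
  have := mul_le_mul_of_nonneg_left (hb (n 0 + a 0) (n 1 + a 1)) Real.pi_pos.le
  simp only [Matrix.of_apply] at this
  linarith

theorem IsSiegel.two_smul {Ω : Matrix (Fin 2) (Fin 2) ℂ} (hΩ : IsSiegel Ω) :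
    IsSiegel ((2 : ℂ) • Ω) := by
  refine ⟨hΩ.1.smul 2, ?_⟩
  have h := hΩ.2.smul (show (0 : ℝ) < 2 by norm_num)
  convert h using 1
  ext i j
  simp

/-! ### Second-order theta constants -/

/-- The second-order theta constant `θ[(x, y); 0](0, 2Ω)`. -/
noncomputable def theta2nd (Ω : Matrix (Fin 2) (Fin 2) ℂ) (x y : ℝ) : ℂ :=
  theta2 ![x, y] 0 0 ((2 : ℂ) • Ω)

/-- Translating the lattice by an integer vector does not change `θ[(x, y); 0](0, 2Ω)`. -/
theorem theta2nd_add_int (Ω : Matrix (Fin 2) (Fin 2) ℂ) (x y : ℝ) (r s : ℤ) :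
    theta2nd Ω (x + r) (y + s) = theta2nd Ω x y := by
  rw [theta2nd, theta2nd, theta2_zero_eq_tsum, theta2_zero_eq_tsum,
    ← (Equiv.addRight ![r, s]).tsum_eq (thetaTerm ![x, y] 0 _)]
  refine tsum_congr fun n => ?_
  simp only [thetaTerm, Fin.sum_univ_two]
  congr 1
  simp
  ring

/-- The change of summation variables `(c, k, l) ↦ (k + l + c, k - l)`, with `c` in `{0, 1}²`:
it splits pairs of lattice vectors by the parity of their difference. -/
def paritySplit (x : (Fin 2 × Fin 2) × (Fin 2 → ℤ) × (Fin 2 → ℤ)) :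
    (Fin 2 → ℤ) × (Fin 2 → ℤ) :=
  (x.2.1 + x.2.2 + ![((x.1.1 : ℕ) : ℤ), ((x.1.2 : ℕ) : ℤ)], x.2.1 - x.2.2)

theorem paritySplit_bijective : Function.Bijective paritySplit := by
  constructor
  · rintro ⟨⟨c, d⟩, k, l⟩ ⟨⟨c', d'⟩, k', l'⟩ h
    simp only [paritySplit, Prod.mk.injEq, funext_iff, Fin.forall_fin_two, Pi.add_apply,
      Pi.sub_apply, Matrix.cons_val_zero, Matrix.cons_val_one, Fin.ext_iff] at h ⊢
    obtain ⟨⟨h1, h2⟩, h3, h4⟩ := h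
    have := c.2; have := d.2; have := c'.2; have := d'.2
    omega
  · rintro ⟨n, m⟩
    refine ⟨((⟨((n 0 - m 0) % 2).toNat, by omega⟩, ⟨((n 1 - m 1) % 2).toNat, by omega⟩),
      fun i => m i + (n i - m i) / 2, fun i => (n i - m i) / 2), ?_⟩
    simp only [paritySplit, Prod.mk.injEq, funext_iff, Fin.forall_fin_two, Pi.add_apply,
      Pi.sub_apply, Matrix.cons_val_zero, Matrix.cons_val_one]
    omega

/-- The parallelogram law `Q(p + q) + Q(p - q) = 2 Q(p) + 2 Q(q)`, exponentiated. -/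
theorem thetaTerm_mul_thetaTerm (Ω : Matrix (Fin 2) (Fin 2) ℂ) (α β ε ζ : ℕ)
    (c : Fin 2 × Fin 2) (k l : Fin 2 → ℤ) :
    thetaTerm ![α / 2, β / 2] ![ε / 2, ζ / 2] Ω (paritySplit (c, k, l)).1 *
      thetaTerm ![α / 2, β / 2] ![ε / 2, ζ / 2] Ω (paritySplit (c, k, l)).2 =
    (-1) ^ ((α + c.1) * ε + (β + c.2) * ζ) *
      (thetaTerm ![((α + c.1 : ℕ) : ℝ) / 2, ((β + c.2 : ℕ) : ℝ) / 2] 0 ((2 : ℂ) • Ω) k *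
        thetaTerm ![(c.1 : ℕ) / 2, (c.2 : ℕ) / 2] 0 ((2 : ℂ) • Ω) l) := by
  rw [← Complex.exp_pi_mul_I, ← Complex.exp_nat_mul]
  simp only [thetaTerm]
  rw [← Complex.exp_add, ← Complex.exp_add, ← Complex.exp_add]
  -- The linear terms differ by `2πi (k₀ ε + k₁ ζ)`, a period of the exponential.
  rw [Complex.exp_eq_exp_iff_exists_int]
  refine ⟨k 0 * ε + k 1 * ζ, ?_⟩
  simp [paritySplit, Fin.sum_univ_two, Matrix.vecHead, Matrix.vecTail]
  ring

/-- The square of a theta constant with half-integral characteristics, as a quadratic form in the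
second-order theta constants. -/
theorem theta2_sq {Ω : Matrix (Fin 2) (Fin 2) ℂ} (hΩ : IsSiegel Ω) (α β ε ζ : ℕ) :
    theta2 ![α / 2, β / 2] ![ε / 2, ζ / 2] 0 Ω ^ 2 =
      ∑ c : Fin 2, ∑ d : Fin 2, (-1) ^ ((α + c) * ε + (β + d) * ζ) *
        (theta2nd Ω (((α + c : ℕ) : ℝ) / 2) (((β + d : ℕ) : ℝ) / 2) *
          theta2nd Ω ((c : ℕ) / 2) ((d : ℕ) / 2)) := by
  have hs := summable_norm_thetaTerm hΩ ![(α : ℝ) / 2, β / 2] ![(ε : ℝ) / 2, ζ / 2]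
  have h2 := fun a => summable_norm_thetaTerm hΩ.two_smul a 0
  let e := Equiv.ofBijective _ paritySplit_bijective
  have hprod := e.summable_iff.2 (summable_mul_of_summable_norm hs hs)
  simp only [Function.comp_def] at hprod
  rw [sq, theta2_zero_eq_tsum, tsum_mul_tsum_of_summable_norm hs hs, ← e.tsum_eq,
    hprod.tsum_prod, tsum_fintype, Fintype.sum_prod_type]
  refine Finset.sum_congr rfl fun c _ => Finset.sum_congr rfl fun d _ => ?_
  rw [theta2nd, theta2nd, theta2_zero_eq_tsum, theta2_zero_eq_tsum,
    tsum_mul_tsum_of_summable_norm (h2 _) (h2 _), ← tsum_mul_left]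
  exact tsum_congr fun kl => thetaTerm_mul_thetaTerm Ω α β ε ζ (c, d) kl.1 kl.2

theorem theta2nd_one_left (Ω : Matrix (Fin 2) (Fin 2) ℂ) (y : ℝ) :
    theta2nd Ω 1 y = theta2nd Ω 0 y := by
  simpa using theta2nd_add_int Ω 0 y 1 0

theorem theta2nd_one_right (Ω : Matrix (Fin 2) (Fin 2) ℂ) (x : ℝ) :
    theta2nd Ω x 1 = theta2nd Ω x 0 := by
  simpa using theta2nd_add_int Ω x 0 0 1

/-! ### The net of quadrics -/

theorem net_linear_relations (Ω : Matrix (Fin 2) (Fin 2) ℂ) (hΩ : IsSiegel Ω)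
    (x : Fin 6 → ℂ) :
    let E1 := A₁₀ Ω ^ 2 * x 0 ^ 2 + A₁ Ω ^ 2 * x 3 ^ 2 - A₂ Ω ^ 2 * x 4 ^ 2 - A₅ Ω ^ 2 * x 5 ^ 2
    let E2 := A₁₀ Ω ^ 2 * x 1 ^ 2 + A₃ Ω ^ 2 * x 3 ^ 2 - A₄ Ω ^ 2 * x 4 ^ 2 - A₈ Ω ^ 2 * x 5 ^ 2
    let E3 := A₁₀ Ω ^ 2 * x 2 ^ 2 + A₆ Ω ^ 2 * x 3 ^ 2 - A₉ Ω ^ 2 * x 4 ^ 2 - A₇ Ω ^ 2 * x 5 ^ 2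
    let E5 := A₂ Ω ^ 2 * x 0 ^ 2 - A₄ Ω ^ 2 * x 1 ^ 2 - A₉ Ω ^ 2 * x 2 ^ 2 + A₁₀ Ω ^ 2 * x 4 ^ 2
    let E7 := A₈ Ω ^ 2 * x 0 ^ 2 - A₅ Ω ^ 2 * x 1 ^ 2 - A₉ Ω ^ 2 * x 3 ^ 2 + A₆ Ω ^ 2 * x 4 ^ 2
    let E8 := A₃ Ω ^ 2 * x 0 ^ 2 - A₁ Ω ^ 2 * x 1 ^ 2 + A₇ Ω ^ 2 * x 4 ^ 2 - A₉ Ω ^ 2 * x 5 ^ 2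
    A₁₀ Ω ^ 2 * E5 = A₂ Ω ^ 2 * E1 - A₄ Ω ^ 2 * E2 - A₉ Ω ^ 2 * E3 ∧
    A₁₀ Ω ^ 2 * E7 = A₈ Ω ^ 2 * E1 - A₅ Ω ^ 2 * E2 ∧
    A₁₀ Ω ^ 2 * E8 = A₃ Ω ^ 2 * E1 - A₁ Ω ^ 2 * E2 := by
  have key := theta2_sq hΩ
  have h1 := key 0 0 0 0
  have h2 := key 0 0 0 1
  have h3 := key 0 0 1 0
  have h4 := key 0 0 1 1
  have h5 := key 0 1 0 0
  have h6 := key 1 0 0 0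
  have h7 := key 1 1 0 0
  have h8 := key 0 1 1 0
  have h9 := key 1 0 0 1
  have h10 := key 1 1 1 1
  norm_num [Fin.sum_univ_two, theta2nd_one_left, theta2nd_one_right]
    at h1 h2 h3 h4 h5 h6 h7 h8 h9 h10
  intro E1 E2 E3 E5 E7 E8
  simp only [E1, E2, E3, E5, E7, E8, A₁, A₂, A₃, A₄, A₅, A₆, A₇, A₈, A₉, A₁₀,
    h1, h2, h3, h4, h5, h6, h7, h8, h9, h10]
  refine ⟨?_, ?_, ?_⟩ <;> ring
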